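/- Boundedness of the IPM step computed with an approximate inverse: Let n ≥ d ≥ 1, t > 0, h ≥ 0, κ ≥ 1, let x, s ∈ ℝⁿ have positive entries, and let A ∈ ℝ^{n×d} have full column rank. Let X, S be the diagonal matrices of x, s and assume ‖X‖_F, ‖X⁻¹‖_F, ‖S‖_F, ‖S⁻¹‖_F, ‖A‖_F ≤ κ. Set μ := x⊙s and δ_μ := −h·(μ − t·𝟙), and assume ‖(μ − t·𝟙)/t‖₂ ≤ 0.1. Let D⁻¹ ∈ ℝ^{d×d} be a matrix with ‖(AᵀXS⁻¹A)⁻¹ − D⁻¹‖_F ≤ ε, where ε ≥ 0 satisfies κ⁴·ε ≤ 0.1. Define P̃ := X^{1/2} S^{−1/2} A D⁻¹ Aᵀ S^{−1/2} X^{1/2}, δ_x := X^{1/2} S^{−1/2} (I − P̃) X^{−1/2} S^{−1/2} δ_μ, and δ_s := X^{−1/2} S^{1/2} P̃ X^{−1/2} S^{−1/2} δ_μ. Then ‖X⁻¹ δ_x‖₂ ≤ 0.15·h and ‖S⁻¹ δ_s‖₂ ≤ 0.15·h. -/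

import Mathlib

/-!
Write `B = X^{1/2} S^{-1/2} A`. Then `AᵀXS⁻¹A = BᵀB`, so `P = B (BᵀB)⁻¹ Bᵀ` is an orthogonal
projection and both `P` and `1 - P` are contractions for the Euclidean norm. The approximate
projection `P̃ = B D⁻¹ Bᵀ` differs from `P` by `B E Bᵀ` with `‖E‖_F ≤ ε`, and
`‖B‖_F ≤ κ²` because `x i / s i ≤ κ²`; hence `P̃` and `1 - P̃` have operator norm at most
`1 + κ⁴ ε ≤ 1.1` (`approx_proj_bound`).

With `R = X^{-1/2} S^{-1/2}`, the two vectors to be bounded are `R (1 - P̃) R δμ` and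
`R P̃ R δμ`. Centrality gives `μ i ≥ 0.9 t`, so each factor `R` contributes `(0.9 t)^{-1/2}`, and
`‖δμ‖ ≤ 0.1 h t`. In total the norm is at most `1.1 * 0.1 / 0.9 * h ≤ 0.15 * h`.
-/

open Matrix

/-- Frobenius norm of a real matrix. -/
noncomputable def frobNorm {m n : Type*} [Fintype m] [Fintype n] (M : Matrix m n ℝ) : ℝ :=
  Real.sqrt (∑ i, ∑ j, (M i j) ^ 2)

/-- Euclidean norm of a real vector. -/
noncomputable def vecNorm2 {ι : Type*} [Fintype ι] (v : ι → ℝ) : ℝ :=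
  Real.sqrt (∑ i, (v i) ^ 2)

section NormLemmas

variable {ι ι' : Type*} [Fintype ι] [Fintype ι']

lemma vecNorm2_eq_norm (v : ι → ℝ) : vecNorm2 v = ‖WithLp.toLp 2 v‖ := by
  simp [vecNorm2, EuclideanSpace.norm_eq]

lemma vecNorm2_nonneg (v : ι → ℝ) : 0 ≤ vecNorm2 v := Real.sqrt_nonneg _

lemma frobNorm_nonneg (M : Matrix ι ι' ℝ) : 0 ≤ frobNorm M := Real.sqrt_nonneg _

lemma vecNorm2_add_le (v w : ι → ℝ) : vecNorm2 (v + w) ≤ vecNorm2 v + vecNorm2 w := by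
  simp only [vecNorm2_eq_norm, WithLp.toLp_add]
  exact norm_add_le _ _

lemma vecNorm2_sub_le (v w : ι → ℝ) : vecNorm2 (v - w) ≤ vecNorm2 v + vecNorm2 w := by
  simp only [vecNorm2_eq_norm, WithLp.toLp_sub]
  exact norm_sub_le _ _

lemma vecNorm2_smul (c : ℝ) (v : ι → ℝ) : vecNorm2 (c • v) = |c| * vecNorm2 v := by
  simp only [vecNorm2_eq_norm, WithLp.toLp_smul, norm_smul, Real.norm_eq_abs]

lemma vecNorm2_sq (v : ι → ℝ) : vecNorm2 v ^ 2 = v ⬝ᵥ v := by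
  rw [vecNorm2, Real.sq_sqrt (Finset.sum_nonneg fun i _ => sq_nonneg _)]
  simp [dotProduct, sq]

lemma abs_le_vecNorm2 (v : ι → ℝ) (i : ι) : |v i| ≤ vecNorm2 v :=
  Real.abs_le_sqrt
    (Finset.single_le_sum (f := fun i => v i ^ 2) (fun _ _ => sq_nonneg _) (Finset.mem_univ i))

lemma abs_le_frobNorm (M : Matrix ι ι' ℝ) (i : ι) (j : ι') : |M i j| ≤ frobNorm M := by
  apply Real.abs_le_sqrt
  calc M i j ^ 2 ≤ ∑ j, M i j ^ 2 := Finset.single_le_sum (f := fun j => M i j ^ 2)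
        (fun j _ => sq_nonneg _) (Finset.mem_univ j)
    _ ≤ ∑ i, ∑ j, M i j ^ 2 := Finset.single_le_sum (f := fun i => ∑ j, M i j ^ 2)
        (fun _ _ => Finset.sum_nonneg fun j _ => sq_nonneg _) (Finset.mem_univ i)

lemma frobNorm_transpose (M : Matrix ι ι' ℝ) : frobNorm Mᵀ = frobNorm M := by
  simp only [frobNorm, Matrix.transpose_apply]
  rw [Finset.sum_comm]

/-- The Frobenius norm dominates the operator norm, by Cauchy-Schwarz in each row. -/
lemma vecNorm2_mulVec_le (M : Matrix ι ι' ℝ) (v : ι' → ℝ) :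
    vecNorm2 (M *ᵥ v) ≤ frobNorm M * vecNorm2 v := by
  rw [vecNorm2, frobNorm, vecNorm2, Real.sqrt_le_iff]
  refine ⟨by positivity, ?_⟩
  rw [mul_pow, Real.sq_sqrt (by positivity), Real.sq_sqrt (by positivity), Finset.sum_mul]
  exact Finset.sum_le_sum fun i _ => Finset.sum_mul_sq_le_sq_mul_sq _ _ _

lemma frobNorm_diagonal_mul_le [DecidableEq ι] (r : ι → ℝ) (c : ℝ) (hc : 0 ≤ c)
    (hr : ∀ i, r i ^ 2 ≤ c ^ 2) (M : Matrix ι ι' ℝ) :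
    frobNorm (Matrix.diagonal r * M) ≤ c * frobNorm M := by
  rw [frobNorm, frobNorm, Real.sqrt_le_iff]
  refine ⟨by positivity, ?_⟩
  rw [mul_pow, Real.sq_sqrt (by positivity), Finset.mul_sum]
  refine Finset.sum_le_sum fun i _ => ?_
  rw [Finset.mul_sum]
  refine Finset.sum_le_sum fun j _ => ?_
  rw [Matrix.diagonal_mul, mul_pow]
  exact mul_le_mul_of_nonneg_right (hr i) (sq_nonneg _)

lemma vecNorm2_diagonal_mulVec_le [DecidableEq ι] (r : ι → ℝ) (c : ℝ) (hc : 0 ≤ c)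
    (hr : ∀ i, r i ^ 2 ≤ c ^ 2) (v : ι → ℝ) :
    vecNorm2 (Matrix.diagonal r *ᵥ v) ≤ c * vecNorm2 v := by
  rw [vecNorm2, vecNorm2, Real.sqrt_le_iff]
  refine ⟨by positivity, ?_⟩
  rw [mul_pow, Real.sq_sqrt (by positivity), Finset.mul_sum]
  refine Finset.sum_le_sum fun i _ => ?_
  rw [Matrix.mulVec_diagonal, mul_pow]
  exact mul_le_mul_of_nonneg_right (hr i) (sq_nonneg _)

/-- A symmetric idempotent matrix is a contraction: `‖Pw‖² + ‖w - Pw‖² = ‖w‖²`. -/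
lemma vecNorm2_proj_le (P : Matrix ι ι ℝ) (hT : Pᵀ = P) (hP : P * P = P) (w : ι → ℝ) :
    vecNorm2 (P *ᵥ w) ≤ vecNorm2 w ∧ vecNorm2 (w - P *ᵥ w) ≤ vecNorm2 w := by
  have h1 : (P *ᵥ w) ⬝ᵥ (P *ᵥ w) = w ⬝ᵥ (P *ᵥ w) := by
    rw [Matrix.dotProduct_mulVec, ← Matrix.mulVec_transpose, hT, Matrix.mulVec_mulVec, hP,
      dotProduct_comm]
  have h2 : vecNorm2 (P *ᵥ w) ^ 2 + vecNorm2 (w - P *ᵥ w) ^ 2 = vecNorm2 w ^ 2 := by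
    simp only [vecNorm2_sq, sub_dotProduct, dotProduct_sub, h1, dotProduct_comm (P *ᵥ w) w]
    ring
  constructor
  · refine (sq_le_sq₀ (vecNorm2_nonneg _) (vecNorm2_nonneg _)).1 ?_
    nlinarith [sq_nonneg (vecNorm2 (w - P *ᵥ w))]
  · refine (sq_le_sq₀ (vecNorm2_nonneg _) (vecNorm2_nonneg _)).1 ?_
    nlinarith [sq_nonneg (vecNorm2 (P *ᵥ w))]

/-- Replacing `(BᵀB)⁻¹` by `D` in the orthogonal projection onto the range of `B` perturbs it by
at most `‖B‖_F² ‖(BᵀB)⁻¹ - D‖_F` in operator norm, so the perturbed projection and its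
complement are still contractions up to the factor `1 + η`. -/
lemma approx_proj_bound [DecidableEq ι] [DecidableEq ι'] (B : Matrix ι ι' ℝ)
    (D : Matrix ι' ι' ℝ) (hB : IsUnit (Bᵀ * B).det) (b ε η : ℝ) (hb : frobNorm B ≤ b)
    (hD : frobNorm ((Bᵀ * B)⁻¹ - D) ≤ ε) (hη : b ^ 2 * ε ≤ η) (w : ι → ℝ) :
    vecNorm2 ((B * D * Bᵀ) *ᵥ w) ≤ (1 + η) * vecNorm2 w ∧
      vecNorm2 ((1 - B * D * Bᵀ) *ᵥ w) ≤ (1 + η) * vecNorm2 w := by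
  set E := (Bᵀ * B)⁻¹ - D with hE
  set P := B * (Bᵀ * B)⁻¹ * Bᵀ with hP
  have hPT : Pᵀ = P := by
    simp [hP, Matrix.transpose_mul, Matrix.transpose_nonsing_inv, Matrix.mul_assoc]
  have hPP : P * P = P := by
    calc P * P = B * ((Bᵀ * B)⁻¹ * (Bᵀ * B)) * (Bᵀ * B)⁻¹ * Bᵀ := by
          simp only [hP, Matrix.mul_assoc]
      _ = P := by rw [Matrix.nonsing_inv_mul _ hB, Matrix.mul_one]
  obtain ⟨hp1, hp2⟩ := vecNorm2_proj_le P hPT hPP w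
  have hPt : B * D * Bᵀ = P - B * E * Bᵀ := by
    simp only [hP, hE, Matrix.mul_sub, Matrix.sub_mul]
    abel
  have herr : vecNorm2 ((B * E * Bᵀ) *ᵥ w) ≤ η * vecNorm2 w := by
    have hw := vecNorm2_nonneg w
    have hb0 : 0 ≤ b := (frobNorm_nonneg B).trans hb
    have hε : 0 ≤ ε := (frobNorm_nonneg E).trans hD
    calc vecNorm2 ((B * E * Bᵀ) *ᵥ w)
        = vecNorm2 (B *ᵥ (E *ᵥ (Bᵀ *ᵥ w))) := by simp [Matrix.mulVec_mulVec, Matrix.mul_assoc]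
      _ ≤ frobNorm B * (frobNorm E * (frobNorm Bᵀ * vecNorm2 w)) := by
          refine (vecNorm2_mulVec_le _ _).trans ?_
          refine mul_le_mul_of_nonneg_left ?_ (frobNorm_nonneg _)
          refine (vecNorm2_mulVec_le _ _).trans ?_
          exact mul_le_mul_of_nonneg_left (vecNorm2_mulVec_le _ _) (frobNorm_nonneg _)
      _ ≤ b * (ε * (b * vecNorm2 w)) := by
          rw [frobNorm_transpose]
          have := frobNorm_nonneg B
          have := frobNorm_nonneg E
          gcongr
      _ = (b ^ 2 * ε) * vecNorm2 w := by ring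
      _ ≤ η * vecNorm2 w := by gcongr
  constructor
  · rw [hPt, Matrix.sub_mulVec]
    linarith [vecNorm2_sub_le (P *ᵥ w) ((B * E * Bᵀ) *ᵥ w)]
  · have : (1 - B * D * Bᵀ) *ᵥ w = (w - P *ᵥ w) + (B * E * Bᵀ) *ᵥ w := by
      rw [hPt, Matrix.sub_mulVec, Matrix.sub_mulVec, Matrix.one_mulVec]
      abel
    rw [this]
    linarith [vecNorm2_add_le (w - P *ᵥ w) ((B * E * Bᵀ) *ᵥ w)]

/-- Scaling the rows by nonzero factors preserves full column rank. -/
lemma isUnit_det_gram_diagonal_mul [DecidableEq ι] [DecidableEq ι'] (A : Matrix ι ι' ℝ)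
    (hA : IsUnit (Aᵀ * A).det) (c : ι → ℝ) (hc : ∀ i, c i ≠ 0) :
    IsUnit ((Matrix.diagonal c * A)ᵀ * (Matrix.diagonal c * A)).det := by
  rw [← Matrix.isUnit_iff_isUnit_det, ← Matrix.mulVec_injective_iff_isUnit] at hA ⊢
  rw [← Matrix.coe_mulVecLin, injective_iff_map_eq_zero]
  intro v hv
  have h1 : (Matrix.diagonal c * A) *ᵥ v = 0 := by
    rw [← dotProduct_self_eq_zero, Matrix.dotProduct_mulVec, ← Matrix.mulVec_transpose,
      Matrix.mulVec_mulVec]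
    rw [Matrix.mulVecLin_apply] at hv
    rw [hv, zero_dotProduct]
  have h2 : A *ᵥ v = 0 := by
    funext i
    have h3 := congrFun h1 i
    rw [← Matrix.mulVec_mulVec, Matrix.mulVec_diagonal] at h3
    simpa [hc i] using h3
  apply hA
  simp only [← Matrix.mulVec_mulVec, h2, Matrix.mulVec_zero]

end NormLemmas

/-- Boundedness of the IPM step computed with an approximate inverse. -/
theorem ipm_step_bounded_approx_inverse
    {n d : ℕ} (hd : 0 < d) (hnd : d ≤ n)
    (t h κ : ℝ) (ht : 0 < t) (hh : 0 ≤ h) (hκ : 1 ≤ κ)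
    (x s : Fin n → ℝ) (hx : ∀ i, 0 < x i) (hs : ∀ i, 0 < s i)
    (A : Matrix (Fin n) (Fin d) ℝ) (hA : IsUnit (Aᵀ * A).det)
    (X S : Matrix (Fin n) (Fin n) ℝ)
    (hX : X = Matrix.diagonal x) (hS : S = Matrix.diagonal s)
    (hXF : frobNorm X ≤ κ) (hXiF : frobNorm X⁻¹ ≤ κ)
    (hSF : frobNorm S ≤ κ) (hSiF : frobNorm S⁻¹ ≤ κ) (hAF : frobNorm A ≤ κ)
    (μ δμ : Fin n → ℝ)
    (hμ : μ = x * s)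
    (hδμ : δμ = fun i => -h * (μ i - t))
    (hcent : vecNorm2 (fun i => (μ i - t) / t) ≤ 0.1)
    (ε : ℝ) (hε : 0 ≤ ε) (hκε : κ ^ 4 * ε ≤ 0.1)
    (Dinv : Matrix (Fin d) (Fin d) ℝ)
    (hDinv : frobNorm ((Aᵀ * X * S⁻¹ * A)⁻¹ - Dinv) ≤ ε)
    (Xh Xnh Sh Snh : Matrix (Fin n) (Fin n) ℝ)
    (hXh : Xh = Matrix.diagonal fun i => Real.sqrt (x i))
    (hXnh : Xnh = Matrix.diagonal fun i => (Real.sqrt (x i))⁻¹)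
    (hSh : Sh = Matrix.diagonal fun i => Real.sqrt (s i))
    (hSnh : Snh = Matrix.diagonal fun i => (Real.sqrt (s i))⁻¹)
    (Pt : Matrix (Fin n) (Fin n) ℝ)
    (hPt : Pt = Xh * Snh * A * Dinv * Aᵀ * Snh * Xh)
    (δx δs : Fin n → ℝ)
    (hδx : δx = (Xh * Snh * (1 - Pt) * Xnh * Snh) *ᵥ δμ)
    (hδs : δs = (Xnh * Sh * Pt * Xnh * Snh) *ᵥ δμ) :
    vecNorm2 (X⁻¹ *ᵥ δx) ≤ 0.15 * h ∧ vecNorm2 (S⁻¹ *ᵥ δs) ≤ 0.15 * h := by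
  have hsx : ∀ i, 0 < √(x i) := fun i => Real.sqrt_pos.2 (hx i)
  have hss : ∀ i, 0 < √(s i) := fun i => Real.sqrt_pos.2 (hs i)
  have hqx : ∀ i, √(x i) * √(x i) = x i := fun i => Real.mul_self_sqrt (hx i).le
  have hqs : ∀ i, √(s i) * √(s i) = s i := fun i => Real.mul_self_sqrt (hs i).le
  have hXi : X⁻¹ = Matrix.diagonal fun i => (x i)⁻¹ := by
    apply Matrix.inv_eq_left_inv
    rw [hX, Matrix.diagonal_mul_diagonal, ← Matrix.diagonal_one]
    congr 1; funext i; exact inv_mul_cancel₀ (hx i).ne'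
  have hSi : S⁻¹ = Matrix.diagonal fun i => (s i)⁻¹ := by
    apply Matrix.inv_eq_left_inv
    rw [hS, Matrix.diagonal_mul_diagonal, ← Matrix.diagonal_one]
    congr 1; funext i; exact inv_mul_cancel₀ (hs i).ne'
  have hxκ : ∀ i, x i ≤ κ := fun i => by
    have := (abs_le_frobNorm X i i).trans hXF
    rw [hX, Matrix.diagonal_apply_eq] at this
    exact (le_abs_self _).trans this
  have hsκ : ∀ i, (s i)⁻¹ ≤ κ := fun i => by
    have := (abs_le_frobNorm S⁻¹ i i).trans hSiF
    rw [hSi, Matrix.diagonal_apply_eq] at this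
    exact (le_abs_self _).trans this
  set c : Fin n → ℝ := fun i => √(x i) * (√(s i))⁻¹ with hc
  set r : Fin n → ℝ := fun i => (√(x i))⁻¹ * (√(s i))⁻¹ with hr
  set B := Matrix.diagonal c * A with hBdef
  have hcpos : ∀ i, 0 < c i := fun i => mul_pos (hsx i) (inv_pos.2 (hss i))
  have hcsq : ∀ i, c i * c i = x i * (s i)⁻¹ := fun i => by
    rw [← hqx i, ← hqs i, mul_inv]
    simp only [hc, hqx i]
    rw [mul_mul_mul_comm, hqx i]
  have hBunit : IsUnit (Bᵀ * B).det :=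
    isUnit_det_gram_diagonal_mul A hA c fun i => (hcpos i).ne'
  have hgram : Aᵀ * X * S⁻¹ * A = Bᵀ * B := by
    rw [hBdef, Matrix.transpose_mul, Matrix.diagonal_transpose, hX, hSi]
    simp only [Matrix.mul_assoc]
    rw [← Matrix.mul_assoc (Matrix.diagonal x), ← Matrix.mul_assoc (Matrix.diagonal c),
      Matrix.diagonal_mul_diagonal, Matrix.diagonal_mul_diagonal]
    simp only [hcsq]
  have hPB : Pt = B * Dinv * Bᵀ := by
    have h1 : Xh * Snh = Matrix.diagonal c := by
      rw [hXh, hSnh, Matrix.diagonal_mul_diagonal]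
    have h2 : Snh * Xh = Matrix.diagonal c := by
      rw [hXh, hSnh, Matrix.diagonal_mul_diagonal]
      simp only [hc, mul_comm]
    rw [hPt, hBdef, Matrix.transpose_mul, Matrix.diagonal_transpose, h1, Matrix.mul_assoc _ Snh,
      h2]
    simp only [Matrix.mul_assoc]
  have hBF : frobNorm B ≤ κ ^ 2 := by
    have hκ0 : 0 ≤ κ := by linarith
    calc frobNorm B ≤ κ * frobNorm A := by
          refine frobNorm_diagonal_mul_le c κ hκ0 (fun i => ?_) A
          rw [sq, hcsq, sq]
          exact mul_le_mul (hxκ i) (hsκ i) (inv_pos.2 (hs i)).le hκ0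
      _ ≤ κ * κ := by gcongr
      _ = κ ^ 2 := by ring
  rw [hgram] at hDinv
  have hη : (κ ^ 2) ^ 2 * ε ≤ 0.1 := by rw [← pow_mul]; exact hκε
  have hproj := approx_proj_bound B Dinv hBunit _ _ _ hBF hDinv hη
  rw [← hPB] at hproj
  have hμlow : ∀ i, 0.9 * t ≤ x i * s i := fun i => by
    have h1 := (abs_le_vecNorm2 (fun i => (μ i - t) / t) i).trans hcent
    have h2 := (abs_le.1 h1).1
    simp only [le_div_iff₀ ht, hμ, Pi.mul_apply] at h2
    linarith
  have hδ : vecNorm2 δμ ≤ h * t * 0.1 := by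
    have h1 : δμ = (-(h * t)) • fun i => (μ i - t) / t := by
      rw [hδμ]; funext i
      simp only [Pi.smul_apply, smul_eq_mul]
      field_simp
    rw [h1, vecNorm2_smul, abs_neg, abs_of_nonneg (by positivity)]
    gcongr
  set q : ℝ := √((0.9 * t)⁻¹) with hq
  have hq0 : 0 ≤ q := Real.sqrt_nonneg _
  have hq2 : q ^ 2 = (0.9 * t)⁻¹ := Real.sq_sqrt (by positivity)
  have hrq : ∀ i, r i ^ 2 ≤ q ^ 2 := fun i => by
    have h1 : r i ^ 2 = (x i * s i)⁻¹ := by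
      simp only [hr, mul_pow, inv_pow, Real.sq_sqrt (hx i).le, Real.sq_sqrt (hs i).le, mul_inv]
    rw [h1, hq2]
    exact inv_anti₀ (by positivity) (hμlow i)
  have hR := vecNorm2_diagonal_mulVec_le r q hq0 hrq
  -- Both conclusions are the case `Q = 1 - Pt` resp. `Q = Pt` of the following bound.
  have hmain : ∀ Q : Matrix (Fin n) (Fin n) ℝ,
      (∀ w, vecNorm2 (Q *ᵥ w) ≤ (1 + 0.1) * vecNorm2 w) →
      vecNorm2 ((Matrix.diagonal r * Q * Matrix.diagonal r) *ᵥ δμ) ≤ 0.15 * h := by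
    intro Q hQ
    rw [← Matrix.mulVec_mulVec, ← Matrix.mulVec_mulVec]
    calc _ ≤ q * ((1 + 0.1) * (q * (h * t * 0.1))) := by
          refine (hR _).trans (mul_le_mul_of_nonneg_left ?_ hq0)
          refine (hQ _).trans (mul_le_mul_of_nonneg_left ?_ (by norm_num))
          exact (hR _).trans (mul_le_mul_of_nonneg_left hδ hq0)
      _ = q ^ 2 * t * (0.11 * h) := by ring
      _ = 0.11 / 0.9 * h := by rw [hq2]; field_simp
      _ ≤ 0.15 * h := mul_le_mul_of_nonneg_right (by norm_num) hh
  have hXnSn : Xnh * Snh = Matrix.diagonal r := by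
    rw [hXnh, hSnh, Matrix.diagonal_mul_diagonal]
  have hXR : X⁻¹ * (Xh * Snh) = Matrix.diagonal r := by
    rw [hXi, hXh, hSnh, Matrix.diagonal_mul_diagonal, Matrix.diagonal_mul_diagonal]
    congr 1; funext i
    have := (hsx i).ne'
    rw [← mul_assoc]
    simp only [hr]
    congr 1
    rw [inv_mul_eq_iff_eq_mul₀ (hx i).ne', eq_mul_inv_iff_mul_eq₀ this, hqx]
  have hSR : S⁻¹ * (Xnh * Sh) = Matrix.diagonal r := by
    rw [hSi, hXnh, hSh, Matrix.diagonal_mul_diagonal, Matrix.diagonal_mul_diagonal]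
    congr 1; funext i
    have := (hss i).ne'
    rw [mul_left_comm]
    simp only [hr]
    congr 1
    rw [inv_mul_eq_iff_eq_mul₀ (hs i).ne', eq_mul_inv_iff_mul_eq₀ this, hqs]
  constructor
  · have := hmain (1 - Pt) fun w => (hproj w).2
    rw [hδx, Matrix.mulVec_mulVec, Matrix.mul_assoc _ Xnh, hXnSn, ← Matrix.mul_assoc,
      ← Matrix.mul_assoc, hXR]
    exact this
  · have := hmain Pt fun w => (hproj w).1
    rw [hδs, Matrix.mulVec_mulVec, Matrix.mul_assoc _ Xnh, hXnSn, ← Matrix.mul_assoc,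
      ← Matrix.mul_assoc, hSR]
    exact this
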